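/- arXiv:1706.01645 — 4 statements merged into one kernel-verified Lean document; each statement's English description precedes it below -/
import Mathlib

section
/- Let p be an odd prime, let (G, H, T) be a faithful RCC loop folder of order 2p with ⟨T⟩ = G, and let K be a subgroup of G with H ≤ K ≤ G, |G : K| = 2 and |K : H| = p. Suppose H ≠ 1 and H is normal in K. Then |H| = p, and there exists an element a ∈ G \ K with a² = 1 such that K is the internal direct product of H and H^a (i.e., H ∩ H^a = 1 and HH^a = K); in particular, G is isomorphic to the wreath product C_p ≀ C_2. -/
open Pointwise

/-- A loop folder `(G, H, T)`: `T` contains `1` and is a transversal for the right cosets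
of every conjugate `H^g = g⁻¹Hg` of `H` in `G` (note `H^g x = H^g t ↔ g*(x*t⁻¹)*g⁻¹ ∈ H`). -/
def IsLoopFolder {G : Type*} [Group G] (H : Subgroup G) (T : Set G) : Prop :=
  (1 : G) ∈ T ∧ ∀ g x : G, ∃! t, t ∈ T ∧ g * (x * t⁻¹) * g⁻¹ ∈ H

/-- The loop folder is right conjugacy closed: `T` is invariant under conjugation by `G`. -/
def IsRCC {G : Type*} [Group G] (T : Set G) : Prop :=
  ∀ t ∈ T, ∀ g : G, g⁻¹ * t * g ∈ T

/-- The loop folder is faithful: the core `⋂_{g ∈ G} g⁻¹Hg` of `H` in `G` is trivial. -/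
def IsFaithfulFolder {G : Type*} [Group G] (H : Subgroup G) : Prop :=
  ∀ x : G, (∀ g : G, g * x * g⁻¹ ∈ H) → x = 1

/-- The base group `C_p × C_p` of the wreath product, written multiplicatively. -/
abbrev CpCp (p : ℕ) := Multiplicative (ZMod p) × Multiplicative (ZMod p)

/-- The factor-swapping automorphism of `C_p × C_p`. -/
def swapAut (p : ℕ) : MulAut (CpCp p) := (MulEquiv.prodComm : CpCp p ≃* CpCp p)

/-- The action of `C_2` on `C_p × C_p` in which the nontrivial element swaps the factors. -/
def wreathAction (p : ℕ) : Multiplicative (ZMod 2) →* MulAut (CpCp p) where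
  toFun x := if Multiplicative.toAdd x = 0 then 1 else swapAut p
  map_one' := by simp
  map_mul' a b := by
    have h2 : ∀ x : ZMod 2, x = 0 ∨ x = 1 := by decide
    have hswap : swapAut p * swapAut p = 1 := by
      ext x : 1
      simp [swapAut]
    have h11 : (1 : ZMod 2) + 1 = 0 := by decide
    have h10 : (1 : ZMod 2) ≠ 0 := by decide
    rcases h2 (Multiplicative.toAdd a) with ha | ha <;>
      rcases h2 (Multiplicative.toAdd b) with hb | hb <;>
      simp [toAdd_mul, ha, hb, h11, h10, hswap]

/-- The wreath product `C_p ≀ C_2 = (C_p × C_p) ⋊ C_2`, where the nontrivial element of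
`C_2` swaps the two factors. -/
abbrev WreathCpC2 (p : ℕ) := SemidirectProduct (CpCp p) (Multiplicative (ZMod 2)) (wreathAction p)

/-!
For `a ∉ K` the only conjugates of `H` are `H` and `H ^ a`, so their intersection is the core of `H`
and hence trivial; both being normal in `K`, they commute elementwise. Thus `H ^ a` embeds in
`K / H`, which forces `|H| = p` and `K = H × H ^ a`. In particular `a² = x z` with `x ∈ H` and
`z ∈ H ^ a`, and `b = a z⁻¹` satisfies `b² = (a z a⁻¹)⁻¹ x ∈ H`. As `b` commutes with `b²`, also
`b² ∈ H ^ b`, so `b² = 1`. This involution splits `G` over `K` and swaps `H` and `H ^ b`.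
-/

section RelIndex

variable {G : Type*} [Group G] {H K L : Subgroup G}

theorem relIndex_dvd_relIndex_of_le_normalizer (hLK : L ≤ K)
    (hnorm : K ≤ Subgroup.normalizer (H : Set G)) : H.relIndex L ∣ H.relIndex K := by
  have : (H.subgroupOf K).Normal := Subgroup.normal_subgroupOf_of_le_normalizer hnorm
  rw [← Subgroup.relIndex_subgroupOf hLK]
  exact Subgroup.relIndex_dvd_index_of_normal _ _

theorem sup_eq_of_relIndex_eq (hHK : H ≤ K) (hLK : L ≤ K) (hL : H.relIndex L = H.relIndex K)
    (hK : H.relIndex K ≠ 0) : H ⊔ L = K := by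
  have hsup : H ⊔ L ≤ K := sup_le hHK hLK
  have hmul := Subgroup.relIndex_mul_relIndex H (H ⊔ L) K le_sup_left hsup
  have hsup0 : H.relIndex (H ⊔ L) ≠ 0 := left_ne_zero_of_mul (hmul.trans_ne hK)
  have hle : H.relIndex K ≤ H.relIndex (H ⊔ L) :=
    hL.symm.trans_le (Subgroup.relIndex_le_of_le_right le_sup_right hsup0)
  have hone : (H ⊔ L).relIndex K ≤ 1 :=
    Nat.le_of_mul_le_mul_left (by rwa [hmul, mul_one]) (Nat.pos_of_ne_zero hsup0)
  have hne : (H ⊔ L).relIndex K ≠ 0 := right_ne_zero_of_mul (hmul.trans_ne hK)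
  exact hsup.antisymm (Subgroup.relIndex_eq_one.1 (by omega))

end RelIndex

section InternalProduct

variable {G : Type*} [Group G] {A B K : Subgroup G}

theorem commute_of_disjoint_of_le_normalizer (hA : A ≤ Subgroup.normalizer (B : Set G))
    (hB : B ≤ Subgroup.normalizer (A : Set G)) (hdisj : Disjoint A B) {x y : G}
    (hx : x ∈ A) (hy : y ∈ B) : Commute x y := by
  have hbot : ⁅A, B⁆ ≤ ⊥ := hdisj.le_bot.trans' <| le_inf
    (Subgroup.le_normalizer_iff_commutator_le_left.1 hB)
    (Subgroup.le_normalizer_iff_commutator_le_right.1 hA)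
  exact commutatorElement_eq_one_iff_commute.1 (hbot (Subgroup.commutator_mem_commutator hx hy))

theorem exists_prod_mulEquiv_of_disjoint_of_commute (hdisj : Disjoint A B)
    (hcomm : ∀ x ∈ A, ∀ y ∈ B, Commute x y) (hsup : A ⊔ B = K) :
    ∃ e : A × B ≃* K, ∀ z, (e z : G) = z.1 * z.2 := by
  have hcomm' (x : A) (y : B) : Commute (A.subtype x) (B.subtype y) := hcomm x x.2 y y.2
  let f : A × B →* G := A.subtype.noncommCoprod B.subtype hcomm'
  have hinj : Function.Injective f := MonoidHom.noncommCoprod_injective _ _ _ |>.2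
    ⟨A.subtype_injective, B.subtype_injective, by simpa only [Subgroup.range_subtype]⟩
  have hrange : f.range = K := by
    rw [MonoidHom.noncommCoprod_range, A.range_subtype, B.range_subtype, hsup]
  exact ⟨(MonoidHom.ofInjective hinj).trans (MulEquiv.subgroupCongr hrange), fun _ => rfl⟩

end InternalProduct

section SplitExtension

variable {G : Type*} [Group G] {K : Subgroup G} {a : G}

theorem eq_one_or_eq_of_mem_zpowers_of_sq_eq_one (ha : a ^ 2 = 1) {x : G}
    (hx : x ∈ Subgroup.zpowers a) : x = 1 ∨ x = a := by
  obtain ⟨k, rfl⟩ := hx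
  obtain ⟨m, rfl | rfl⟩ := Int.even_or_odd' k
  · simp [zpow_mul, zpow_ofNat, ha]
  · simp [zpow_add, zpow_mul, zpow_ofNat, ha]

theorem isComplement'_zpowers_of_index_two (hK : K.index = 2) (haK : a ∉ K) (ha : a ^ 2 = 1) :
    K.IsComplement' (Subgroup.zpowers a) := by
  refine Subgroup.isComplement'_of_disjoint_and_mul_eq_univ ?_ (Set.eq_univ_of_forall fun g => ?_)
  · rw [Subgroup.disjoint_def]
    intro x hxK hx
    refine (eq_one_or_eq_of_mem_zpowers_of_sq_eq_one ha hx).resolve_right ?_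
    rintro rfl
    exact haK hxK
  · by_cases hg : g ∈ K
    · exact ⟨g, hg, 1, one_mem _, mul_one g⟩
    · have hga : g * a⁻¹ ∈ K := (Subgroup.mul_mem_iff_of_index_two hK).2 <| by
        simp only [inv_mem_iff, hg, haK]
      exact ⟨g * a⁻¹, hga, a, Subgroup.mem_zpowers a, inv_mul_cancel_right g a⟩

theorem exists_zmodTwo_mulEquiv_zpowers (ha : orderOf a = 2) :
    ∃ e : Multiplicative (ZMod 2) ≃* Subgroup.zpowers a, (e (.ofAdd 1) : G) = a := by
  let e : Multiplicative (ZMod 2) ≃* Subgroup.zpowers a :=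
    mulEquivOfPrimeCardEq (p := 2) (by simp) (by rw [Nat.card_zpowers, ha])
  refine ⟨e, (eq_one_or_eq_of_mem_zpowers_of_sq_eq_one (ha ▸ pow_orderOf_eq_one a)
    (e (.ofAdd 1)).2).resolve_left fun h => ?_⟩
  have hone : Multiplicative.ofAdd (1 : ZMod 2) = 1 := e.map_eq_one_iff.1 (Subtype.ext h)
  exact absurd hone (by decide)

theorem nonempty_mulEquiv_semidirectProduct_of_involution {N : Type*} [Group N]
    (φ : Multiplicative (ZMod 2) →* MulAut N) (e : N ≃* K) (hK : K.index = 2) (haK : a ∉ K)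
    (ha : a ^ 2 = 1) (hφ : ∀ n, (e (φ (.ofAdd 1) n) : G) = a * e n * a⁻¹) :
    Nonempty (G ≃* N ⋊[φ] Multiplicative (ZMod 2)) := by
  have : K.Normal := Subgroup.normal_of_index_eq_two hK
  have horder : orderOf a = 2 := orderOf_eq_prime ha fun h => haK (h ▸ K.one_mem)
  obtain ⟨ψ, hψ⟩ := exists_zmodTwo_mulEquiv_zpowers horder
  have hC2 : ∀ c : Multiplicative (ZMod 2), c = 1 ∨ c = .ofAdd 1 := by decide
  refine ⟨((SemidirectProduct.congr e ψ fun c => ?_).trans <|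
    SemidirectProduct.mulEquivSubgroup (isComplement'_zpowers_of_index_two hK haK ha)).symm⟩
  ext n
  obtain rfl | rfl := hC2 c
  · simp
  · simp [hφ, hψ]

end SplitExtension

section IndexTwo

variable {G : Type*} [Group G] {H K : Subgroup G} {a : G}

theorem conj_smul_le_of_normal [K.Normal] (hHK : H ≤ K) (g : G) : MulAut.conj g • H ≤ K :=
  (Subgroup.pointwise_smul_le_pointwise_smul_iff.2 hHK).trans_eq
    (Subgroup.Normal.conj_smul_eq_self g K)

theorem le_normalizer_conj_smul [K.Normal] (hnorm : K ≤ Subgroup.normalizer (H : Set G)) (g : G) :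
    K ≤ Subgroup.normalizer ((MulAut.conj g • H : Subgroup G) : Set G) := by
  have hmap : MulAut.conj g • Subgroup.normalizer (H : Set G) =
      Subgroup.normalizer ((MulAut.conj g • H : Subgroup G) : Set G) :=
    Subgroup.map_equiv_normalizer_eq H (MulAut.conj g)
  rw [← hmap, ← Subgroup.Normal.conj_smul_eq_self g K]
  exact Subgroup.pointwise_smul_le_pointwise_smul_iff.2 hnorm

theorem mem_conj_inv_smul_iff {x : G} : x ∈ MulAut.conj a⁻¹ • H ↔ a * x * a⁻¹ ∈ H := by
  rw [map_inv, Subgroup.mem_inv_pointwise_smul_iff, MulAut.smul_def, MulAut.conj_apply]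

theorem normalCore_eq_inf_conj_smul_of_index_two (hK : K.index = 2)
    (hnorm : K ≤ Subgroup.normalizer (H : Set G)) (ha : a ∉ K) :
    H.normalCore = H ⊓ MulAut.conj a⁻¹ • H := by
  refine le_antisymm (le_inf H.normalCore_le fun x hx => mem_conj_inv_smul_iff.2 (hx a)) ?_
  rintro x ⟨hx, hxa⟩ g
  by_cases hg : g ∈ K
  · exact (Subgroup.mem_normalizer_iff.1 (hnorm hg) x).1 hx
  · have hga : g * a⁻¹ ∈ K := (Subgroup.mul_mem_iff_of_index_two hK).2 <| by
      simp only [inv_mem_iff, hg, ha]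
    have := (Subgroup.mem_normalizer_iff.1 (hnorm hga) _).1 (mem_conj_inv_smul_iff.1 hxa)
    simpa only [mul_assoc, mul_inv_rev, inv_inv, inv_mul_cancel_left, inv_mul_cancel, mul_one]
      using this

theorem disjoint_conj_smul_of_index_two (hK : K.index = 2)
    (hnorm : K ≤ Subgroup.normalizer (H : Set G)) (hcore : H.normalCore = ⊥) (ha : a ∉ K) :
    Disjoint H (MulAut.conj a⁻¹ • H) := by
  rw [disjoint_iff, ← normalCore_eq_inf_conj_smul_of_index_two hK hnorm ha, hcore]

theorem relIndex_conj_smul_of_disjoint {g : G} (hdisj : Disjoint H (MulAut.conj g • H)) :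
    H.relIndex (MulAut.conj g • H) = Nat.card H := by
  rw [← Subgroup.inf_relIndex_right, hdisj.eq_bot, Subgroup.relIndex_bot_left]
  exact Nat.card_congr (Subgroup.equivSMul (MulAut.conj g) H).symm.toEquiv

theorem commute_conj_smul_of_disjoint [K.Normal] (hHK : H ≤ K)
    (hnorm : K ≤ Subgroup.normalizer (H : Set G)) {g : G}
    (hdisj : Disjoint H (MulAut.conj g • H)) {x y : G} (hx : x ∈ H) (hy : y ∈ MulAut.conj g • H) :
    Commute x y :=
  commute_of_disjoint_of_le_normalizer (hHK.trans (le_normalizer_conj_smul hnorm g))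
    ((conj_smul_le_of_normal hHK g).trans hnorm) hdisj hx hy

theorem coe_sup_conj_smul [K.Normal] (hHK : H ≤ K) (hnorm : K ≤ Subgroup.normalizer (H : Set G))
    (g : G) : ((H ⊔ MulAut.conj g • H : Subgroup G) : Set G) =
      H * (MulAut.conj g • H : Subgroup G) :=
  Subgroup.coe_mul_of_left_le_normalizer_right _ _ (hHK.trans (le_normalizer_conj_smul hnorm g))

theorem card_eq_relIndex_of_disjoint_conj_smul [K.Normal] (hHK : H ≤ K)
    (hnorm : K ≤ Subgroup.normalizer (H : Set G)) (hp : (H.relIndex K).Prime) (hH : H ≠ ⊥) {g : G}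
    (hdisj : Disjoint H (MulAut.conj g • H)) : Nat.card H = H.relIndex K := by
  have hdvd : Nat.card H ∣ H.relIndex K := relIndex_conj_smul_of_disjoint hdisj ▸
    relIndex_dvd_relIndex_of_le_normalizer (conj_smul_le_of_normal hHK g) hnorm
  exact ((Nat.dvd_prime hp).1 hdvd).resolve_left fun h => hH (Subgroup.card_eq_one.1 h)

theorem sup_conj_smul_eq_of_card_eq_relIndex [K.Normal] (hHK : H ≤ K)
    (hcard : Nat.card H = H.relIndex K) (hfin : H.relIndex K ≠ 0) {g : G}
    (hdisj : Disjoint H (MulAut.conj g • H)) : H ⊔ MulAut.conj g • H = K :=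
  sup_eq_of_relIndex_eq hHK (conj_smul_le_of_normal hHK g)
    ((relIndex_conj_smul_of_disjoint hdisj).trans hcard) hfin

theorem sq_eq_one_of_sq_mem_of_normalCore_eq_bot (hK : K.index = 2)
    (hnorm : K ≤ Subgroup.normalizer (H : Set G)) (hcore : H.normalCore = ⊥) (ha : a ∉ K)
    (hsq : a ^ 2 ∈ H) : a ^ 2 = 1 := by
  refine Subgroup.disjoint_def.1 (disjoint_conj_smul_of_index_two hK hnorm hcore ha) hsq ?_
  rwa [mem_conj_inv_smul_iff, ← pow_succ', pow_succ, mul_inv_cancel_right]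

theorem exists_sq_eq_one_of_sup_conj_smul_eq (hK : K.index = 2) (hHK : H ≤ K)
    (hnorm : K ≤ Subgroup.normalizer (H : Set G)) (hcore : H.normalCore = ⊥) (ha : a ∉ K)
    (hsup : H ⊔ MulAut.conj a⁻¹ • H = K) : ∃ b ∉ K, b ^ 2 = 1 := by
  have : K.Normal := Subgroup.normal_of_index_eq_two hK
  have hsq : a ^ 2 ∈ (H : Set G) * (MulAut.conj a⁻¹ • H : Subgroup G) := by
    rw [← coe_sup_conj_smul hHK hnorm, hsup]
    exact Subgroup.sq_mem_of_index_two hK a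
  obtain ⟨x, hx, z, hz, hxz⟩ := hsq
  have hb : a * z⁻¹ ∉ K := by
    rwa [Subgroup.mul_mem_cancel_right K (K.inv_mem (conj_smul_le_of_normal hHK a⁻¹ hz))]
  have hbsq : (a * z⁻¹) ^ 2 = (a * z * a⁻¹)⁻¹ * x := calc
    (a * z⁻¹) ^ 2 = (a * z * a⁻¹)⁻¹ * a ^ 2 * z⁻¹ := by simp only [sq]; group
    _ = (a * z * a⁻¹)⁻¹ * (x * z) * z⁻¹ := congrArg (_ * · * z⁻¹) hxz.symm
    _ = (a * z * a⁻¹)⁻¹ * x := by group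
  exact ⟨_, hb, sq_eq_one_of_sq_mem_of_normalCore_eq_bot hK hnorm hcore hb <|
    hbsq ▸ H.mul_mem (H.inv_mem (mem_conj_inv_smul_iff.1 hz)) hx⟩

end IndexTwo

section Wreath

variable {G : Type*} [Group G] {H K : Subgroup G} {a : G} {p : ℕ}

theorem wreathAction_ofAdd_one_apply (x : CpCp p) :
    wreathAction p (.ofAdd 1) x = x.swap := rfl

theorem nonempty_mulEquiv_wreathCpC2 (e : Multiplicative (ZMod p) ≃* H) (hK : K.index = 2)
    (haK : a ∉ K) (ha : a ^ 2 = 1) (hdisj : Disjoint H (MulAut.conj a⁻¹ • H))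
    (hcomm : ∀ x ∈ H, ∀ y ∈ MulAut.conj a⁻¹ • H, Commute x y)
    (hsup : H ⊔ MulAut.conj a⁻¹ • H = K) : Nonempty (G ≃* WreathCpC2 p) := by
  obtain ⟨f, hf⟩ := exists_prod_mulEquiv_of_disjoint_of_commute hdisj hcomm hsup
  let E : CpCp p ≃* K :=
    (e.prodCongr (e.trans (Subgroup.equivSMul (MulAut.conj a⁻¹) H))).trans f
  have hE (x : CpCp p) : (E x : G) = e x.1 * (a⁻¹ * e x.2 * a) :=
    (hf _).trans (congrArg (fun g : G => e x.1 * (a⁻¹ * e x.2 * g)) (inv_inv a))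
  have hmem (x : H) : a⁻¹ * x * a ∈ MulAut.conj a⁻¹ • H :=
    mem_conj_inv_smul_iff.2 <| by
      simp only [mul_assoc, mul_inv_cancel_left, mul_inv_cancel, mul_one, SetLike.coe_mem]
  have hainv : a⁻¹ = a := inv_eq_of_mul_eq_one_left (by rwa [← sq])
  refine nonempty_mulEquiv_semidirectProduct_of_involution (wreathAction p) E hK haK ha fun x => ?_
  calc (E (wreathAction p (.ofAdd 1) x) : G)
      = e x.2 * (a⁻¹ * e x.1 * a) := by rw [wreathAction_ofAdd_one_apply, hE]; rfl
    _ = a⁻¹ * e x.1 * a * e x.2 := hcomm _ (e x.2).2 _ (hmem (e x.1))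
    _ = a * e x.1 * a⁻¹ * e x.2 := by rw [hainv]
    _ = a * (e x.1 * (a⁻¹ * e x.2 * a)) * a⁻¹ := by group
    _ = a * E x * a⁻¹ := by rw [hE]

end Wreath

theorem isFaithfulFolder_iff_normalCore_eq_bot {G : Type*} [Group G] {H : Subgroup G} :
    IsFaithfulFolder H ↔ H.normalCore = ⊥ :=
  (Subgroup.eq_bot_iff_forall H.normalCore).symm

theorem stmt_14_general {G : Type*} [Group G] (p : ℕ) (hp : p.Prime) (H K : Subgroup G)
    (hFaith : IsFaithfulFolder H) (hHK : H ≤ K) (hGK : K.index = 2) (hKH : H.relIndex K = p)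
    (hHne : H ≠ ⊥) (hHnorm : ∀ k ∈ K, ∀ x ∈ H, k⁻¹ * x * k ∈ H) :
    Nat.card H = p ∧
    (∃ a : G, a ∉ K ∧ a ^ 2 = 1 ∧
      H ⊓ Subgroup.map (MulAut.conj a⁻¹).toMonoidHom H = ⊥ ∧
      (H : Set G) * (Subgroup.map (MulAut.conj a⁻¹).toMonoidHom H : Set G) = (K : Set G)) ∧
    Nonempty (G ≃* WreathCpC2 p) := by
  subst hKH
  have : Fact (H.relIndex K).Prime := ⟨hp⟩
  have : K.Normal := Subgroup.normal_of_index_eq_two hGK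
  have hcore : H.normalCore = ⊥ := isFaithfulFolder_iff_normalCore_eq_bot.1 hFaith
  have hnorm : K ≤ Subgroup.normalizer (H : Set G) := Subgroup.le_normalizer_iff.2
    fun k hk x hx => by simpa only [inv_inv] using hHnorm k⁻¹ (K.inv_mem hk) x hx
  have hdisj {g : G} (hg : g ∉ K) := disjoint_conj_smul_of_index_two hGK hnorm hcore hg
  obtain ⟨b, hb, -⟩ := Subgroup.index_eq_two_iff_exists_notMem_and.1 hGK
  have hcard := card_eq_relIndex_of_disjoint_conj_smul hHK hnorm hp hHne (hdisj hb)
  have hsup {g : G} (hg : g ∉ K) :=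
    sup_conj_smul_eq_of_card_eq_relIndex hHK hcard hp.ne_zero (hdisj hg)
  obtain ⟨a, haK, ha⟩ := exists_sq_eq_one_of_sup_conj_smul_eq hGK hHK hnorm hcore hb (hsup hb)
  refine ⟨hcard, ⟨a, haK, ha, (hdisj haK).eq_bot, ?_⟩, ?_⟩
  · exact (coe_sup_conj_smul hHK hnorm a⁻¹).symm.trans (congrArg _ (hsup haK))
  · exact nonempty_mulEquiv_wreathCpC2 (mulEquivOfPrimeCardEq (by simp) hcard) hGK haK ha
      (hdisj haK) (fun _ hx _ hy => commute_conj_smul_of_disjoint hHK hnorm (hdisj haK) hx hy)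
      (hsup haK)

/-- If `H ≠ 1` is normal in `K`, then `|H| = p` and there is `a ∈ G \\ K` with `a² = 1`
such that `K = H × H^a`; in particular `G ≅ C_p ≀ C_2`. -/
theorem stmt_14 {G : Type*} [Group G] [Finite G] (p : ℕ) (hp : p.Prime) (hodd : Odd p)
    (H K : Subgroup G) (T : Set G)
    (hLF : IsLoopFolder H T) (hRCC : IsRCC T) (hFaith : IsFaithfulFolder H)
    (hord : Nat.card T = 2 * p) (hgen : Subgroup.closure T = ⊤)
    (hHK : H ≤ K) (hGK : K.index = 2) (hKH : H.relIndex K = p)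
    (hHne : H ≠ ⊥) (hHnorm : ∀ k ∈ K, ∀ x ∈ H, k⁻¹ * x * k ∈ H) :
    Nat.card H = p ∧
    (∃ a : G, a ∉ K ∧ a ^ 2 = 1 ∧
      H ⊓ Subgroup.map (MulAut.conj a⁻¹).toMonoidHom H = ⊥ ∧
      (H : Set G) * (Subgroup.map (MulAut.conj a⁻¹).toMonoidHom H : Set G) = (K : Set G)) ∧
    Nonempty (G ≃* WreathCpC2 p) :=
  stmt_14_general p hp H K hFaith hHK hGK hKH hHne hHnorm
end

section
/- Let p be an odd prime, let (G, H, T) be a faithful RCC loop folder of order 2p with ⟨T⟩ = G, and let K be a subgroup of G with H ≤ K ≤ G, |G : K| = 2 and |K : H| = p. Set T₁ := T ∩ K, K₁ := ⟨T₁⟩ and H₁ := H ∩ K₁. Assume that H ≠ 1 and that every s ∈ T with s ∉ K commutes with every element of K₁. Then H₁ = 1, K₁ is contained in the center of G, and G is isomorphic to the wreath product C_p ≀ C_2. -/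
/-!
Let `A = ⟨T ∩ K⟩`. As `T` meets every coset of `H`, one has `G = H * C_G(A)`, so `H ∩ A` is
contained in every conjugate of `H` and hence trivial. Then `A` is a complement of `H` in `K`, so
it has order `p`; being abelian, it commutes with all of `T` and is therefore central. Consequently
`K = H * A` normalizes `H`, and for `t ∉ K` the group `H ∩ tHt⁻¹` lies in the core of `H`, hence is
trivial. As `[K : H]` is prime, `K = H × tHt⁻¹` with `|H| = p`, and `t` can be chosen to be an
involution: if `s ∉ K`, then `s² = a · sas⁻¹` for some `a ∈ H`, and `t = a⁻¹s` squares to `1`.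
-/

section

open scoped Pointwise

variable {G : Type*} [Group G]

theorem IsLoopFolder.mul_eq_univ {H : Subgroup G} {T : Set G} (h : IsLoopFolder H T) :
    (H : Set G) * T = Set.univ := by
  refine Set.eq_univ_of_forall fun x ↦ ?_
  obtain ⟨t, ⟨htT, hxt⟩, -⟩ := h.2 1 x
  exact ⟨x * t⁻¹, by simpa using hxt, t, htT, inv_mul_cancel_right x t⟩

theorem IsFaithfulFolder.normalCore_eq_bot {H : Subgroup G} (h : IsFaithfulFolder H) :
    H.normalCore = ⊥ :=
  H.normalCore.eq_bot_iff_forall.2 h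

/-! ### Factorizations of a group -/

theorem subset_mul_inter_of_mul_eq_univ {H K : Subgroup G} {T : Set G} (hHK : H ≤ K)
    (hHT : (H : Set G) * T = Set.univ) : (K : Set G) ⊆ H * (T ∩ K) := by
  intro k hk
  obtain ⟨h, hh, t, ht, rfl⟩ := Set.eq_univ_iff_forall.1 hHT k
  exact ⟨h, hh, t, ⟨ht, (K.mul_mem_cancel_left (hHK hh)).1 hk⟩, rfl⟩

theorem mul_subgroup_eq_univ_of_diff_subset {H K C : Subgroup G} {T : Set G} (hHK : H ≤ K)
    (hK : K ≠ ⊤) (hHT : (H : Set G) * T = Set.univ) (hTC : T \ K ⊆ C) :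
    (H : Set G) * (C : Set G) = Set.univ := by
  have outside : ∀ g ∉ K, ∃ h ∈ H, ∃ c ∈ C, c ∉ K ∧ h * c = g := by
    intro g hg
    obtain ⟨h, hh, t, ht, rfl⟩ := Set.eq_univ_iff_forall.1 hHT g
    have htK : t ∉ K := fun htK ↦ hg (K.mul_mem (hHK hh) htK)
    exact ⟨h, hh, t, hTC ⟨ht, htK⟩, htK, rfl⟩
  refine Set.eq_univ_of_forall fun g ↦ ?_
  by_cases hg : g ∈ K
  · obtain ⟨s, hs⟩ := SetLike.exists_not_mem_of_ne_top K hK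
    obtain ⟨-, -, s, hsC, hsK, -⟩ := outside s hs
    obtain ⟨h, hh, c, hc, -, hgs⟩ := outside (g * s) fun h ↦ hsK ((K.mul_mem_cancel_left hg).1 h)
    exact ⟨h, hh, c * s⁻¹, mul_mem hc (inv_mem hsC), by simp [← mul_assoc, hgs]⟩
  · obtain ⟨h, hh, c, hc, -, rfl⟩ := outside g hg
    exact Set.mul_mem_mul hh hc

theorem inf_le_normalCore_of_mul_centralizer_eq_univ {H A : Subgroup G}
    (hHA : (H : Set G) * (Subgroup.centralizer (A : Set G) : Set G) = Set.univ) :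
    H ⊓ A ≤ H.normalCore := by
  rintro x ⟨hxH, hxA⟩ g
  obtain ⟨h, hh, c, hc, rfl⟩ := Set.eq_univ_iff_forall.1 hHA g
  have conj_eq : h * c * x * (h * c)⁻¹ = h * x * h⁻¹ := by
    rw [mul_assoc h c x, ← Subgroup.mem_centralizer_iff.1 hc x hxA]
    group
  exact conj_eq ▸ mul_mem (mul_mem hh hxH) (inv_mem hh)

theorem card_eq_relIndex_of_disjoint_of_subset_mul {H A K : Subgroup G} (hAK : A ≤ K)
    (hdisj : Disjoint H A) (hK : (K : Set G) ⊆ H * A) : Nat.card A = H.relIndex K := by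
  have compl : (H.subgroupOf K).IsComplement' (A.subgroupOf K) := by
    refine Subgroup.isComplement'_of_disjoint_and_mul_eq_univ ?_ ?_
    · exact Subgroup.disjoint_def.2 fun hx hy ↦ Subtype.ext (Subgroup.disjoint_def.1 hdisj hx hy)
    · refine Set.eq_univ_of_forall fun ⟨k, hk⟩ ↦ ?_
      obtain ⟨h, hh, a, ha, rfl⟩ := hK hk
      exact ⟨⟨h, (K.mul_mem_cancel_right (hAK ha)).1 hk⟩, hh, ⟨a, hAK ha⟩, ha, rfl⟩
  rw [← Nat.card_congr (Subgroup.subgroupOfEquivOfLe hAK).toEquiv]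
  exact compl.symm.index_eq_card.symm

theorem sup_eq_of_prime_relIndex {H K L : Subgroup G} (hp : (H.relIndex K).Prime)
    (hHK : H ≤ K) (hLK : L ≤ K) (hLH : ¬L ≤ H) : H ⊔ L = K := by
  have tower : H.relIndex (H ⊔ L) * (H ⊔ L).relIndex K = H.relIndex K :=
    Subgroup.relIndex_mul_relIndex _ _ _ le_sup_left (sup_le hHK hLK)
  rcases Nat.prime_mul_iff.1 (tower ▸ hp) with ⟨-, h⟩ | ⟨-, h⟩
  · exact (sup_le hHK hLK).antisymm (Subgroup.relIndex_eq_one.1 h)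
  · exact absurd (le_sup_right.trans (Subgroup.relIndex_eq_one.1 h)) hLH

/-! ### Commutativity -/

theorem le_center_of_closure_eq_top {A : Subgroup G} {T : Set G}
    (hT : Subgroup.closure T = ⊤) (hTA : T ⊆ Subgroup.centralizer (A : Set G)) :
    A ≤ Subgroup.center G :=
  Subgroup.centralizer_eq_top_iff_subset.1 (top_le_iff.1 (hT ▸ (Subgroup.closure_le _).2 hTA))

theorem isMulCommutative_of_prime_card {A : Subgroup G} (hA : (Nat.card A).Prime) :
    IsMulCommutative A :=
  have : Fact (Nat.card A).Prime := ⟨hA⟩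
  have : IsCyclic A := isCyclic_of_prime_card rfl
  inferInstance

theorem isMulCommutative_of_le_sup_center {H K : Subgroup G} [IsMulCommutative H]
    (hK : K ≤ H ⊔ Subgroup.center G) : IsMulCommutative K := by
  have hKH : K ≤ Subgroup.centralizer H :=
    hK.trans (sup_le H.le_centralizer (Subgroup.center_le_centralizer _))
  exact Subgroup.le_centralizer_iff_isMulCommutative.1 <| hK.trans <|
    sup_le (Subgroup.le_centralizer_iff.1 hKH) (Subgroup.center_le_centralizer _)

/-! ### Elements outside a subgroup of index two -/

theorem inf_conj_smul_le_normalCore {H K : Subgroup G} (hK : K.index = 2)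
    (hKH : K ≤ Subgroup.normalizer H) {t : G} (ht : t ∉ K) :
    H ⊓ MulAut.conj t • H ≤ H.normalCore := by
  have conj_mem : ∀ k ∈ K, ∀ y ∈ H, k * y * k⁻¹ ∈ H := Subgroup.le_normalizer_iff.1 hKH
  rintro x ⟨hxH, y, hy, rfl⟩ g
  by_cases hg : g ∈ K
  · exact conj_mem g hg _ hxH
  · have hgt : g * t ∈ K := by simp [Subgroup.mul_mem_iff_of_index_two hK, hg, ht]
    simpa [mul_assoc] using conj_mem _ hgt y hy

theorem exists_mul_self_eq_one_of_conj_smul {H K : Subgroup G} [IsMulCommutative K]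
    (hK : K.index = 2) (hHK : H ≤ K) {s : G} (hs : s ∉ K)
    (hdisj : Disjoint H (MulAut.conj s • H))
    (hmul : (K : Set G) ⊆ H * (MulAut.conj s • H : Subgroup G)) : ∃ t ∉ K, t * t = 1 := by
  have hKn : K.Normal := Subgroup.normal_of_index_eq_two hK
  have hssK : s * s ∈ K := Subgroup.mul_self_mem_of_index_two hK s
  obtain ⟨a, ha, -, ⟨b, hb, rfl⟩, hss⟩ := hmul hssK
  replace hss : a * (s * b * s⁻¹) = s * s := hss
  have comm {x y : G} (hx : x ∈ K) (hy : y ∈ K) : x * y = y * x :=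
    setLike_mul_comm (s := K) hx hy
  have hsaK : s * a * s⁻¹ ∈ K := hKn.conj_mem a (hHK ha) s
  have hsbK : s * b * s⁻¹ ∈ K := hKn.conj_mem b (hHK hb) s
  -- Conjugating `s² = a · sbs⁻¹` by `s` fixes the left-hand side and swaps the two factors.
  have hss' : b * (s * a * s⁻¹) = s * s := by
    calc b * (s * a * s⁻¹) = s * a * s⁻¹ * b := comm (hHK hb) hsaK
      _ = s * a * s⁻¹ * (s * s * b * (s * s)⁻¹) := by
          rw [comm hssK (hHK hb), mul_inv_cancel_right]
      _ = s * (a * (s * b * s⁻¹)) * s⁻¹ := by group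
      _ = s * s := by rw [hss]; group
  have hab : b⁻¹ * a = s * (a * b⁻¹) * s⁻¹ := by
    calc b⁻¹ * a = b⁻¹ * (a * (s * b * s⁻¹)) * (s * b * s⁻¹)⁻¹ := by group
      _ = b⁻¹ * (b * (s * a * s⁻¹)) * (s * b * s⁻¹)⁻¹ := by rw [hss, hss']
      _ = s * (a * b⁻¹) * s⁻¹ := by group
  have hba : b⁻¹ * a = 1 := Subgroup.disjoint_def.1 hdisj (mul_mem (inv_mem hb) ha)
    ⟨a * b⁻¹, mul_mem ha (inv_mem hb), hab.symm⟩
  obtain rfl : a = b := (inv_mul_eq_one.1 hba).symm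
  refine ⟨a⁻¹ * s, fun h ↦ hs ((K.mul_mem_cancel_left (inv_mem (hHK ha))).1 h), ?_⟩
  calc a⁻¹ * s * (a⁻¹ * s) = a⁻¹ * (s * a * s⁻¹)⁻¹ * (s * s) := by group
    _ = (s * a * s⁻¹ * a)⁻¹ * (s * s) := by rw [← mul_inv_rev]
    _ = 1 := by rw [← comm (hHK ha) hsaK, hss, inv_mul_cancel]

/-! ### Homomorphisms out of the wreath product -/

theorem semidirectProduct_lift_injective {N Q : Type*} [Group N] [Group Q] {φ : Q →* MulAut N}
    {f : N →* G} {g : Q →* G}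
    (h : ∀ q, f.comp (φ q).toMonoidHom = (MulAut.conj (g q)).toMonoidHom.comp f)
    (hf : Function.Injective f) (hg : Function.Injective g)
    (hdisj : Disjoint f.range g.range) :
    Function.Injective (SemidirectProduct.lift (φ := φ) f g h) := by
  refine (injective_iff_map_eq_one _).2 fun ⟨n, q⟩ hnq ↦ ?_
  replace hnq : f n * g q = 1 := hnq
  have hfn : f n = 1 := Subgroup.disjoint_def.1 hdisj ⟨n, rfl⟩
    ⟨q⁻¹, by rw [map_inv, eq_inv_of_mul_eq_one_left hnq]⟩
  have hgq : g q = 1 := by rwa [hfn, one_mul] at hnq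
  exact SemidirectProduct.ext ((map_eq_one_iff f hf).1 hfn) ((map_eq_one_iff g hg).1 hgq)

theorem range_semidirectProduct_lift {N Q : Type*} [Group N] [Group Q] {φ : Q →* MulAut N}
    (f : N →* G) (g : Q →* G)
    (h : ∀ q, f.comp (φ q).toMonoidHom = (MulAut.conj (g q)).toMonoidHom.comp f) :
    (SemidirectProduct.lift (φ := φ) f g h).range = f.range ⊔ g.range := by
  apply le_antisymm
  · rintro - ⟨x, rfl⟩
    exact Subgroup.mul_mem_sup ⟨x.left, rfl⟩ ⟨x.right, rfl⟩
  · refine sup_le ?_ ?_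
    · rintro - ⟨n, rfl⟩
      exact ⟨.inl n, SemidirectProduct.lift_inl _ _ _ n⟩
    · rintro - ⟨q, rfl⟩
      exact ⟨.inr q, SemidirectProduct.lift_inr _ _ _ q⟩

theorem multiplicative_zmod_two_cases (c : Multiplicative (ZMod 2)) :
    c = 1 ∨ c = Multiplicative.ofAdd 1 := by
  revert c
  decide

/-- The homomorphism from `C_2` sending the generator to an element `t` with `t * t = 1`. -/
def involutionHom (t : G) (ht : t * t = 1) : Multiplicative (ZMod 2) →* G where
  toFun c := if c = 1 then 1 else t
  map_one' := if_pos rfl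
  map_mul' a b := by
    rcases multiplicative_zmod_two_cases a with rfl | rfl <;>
      rcases multiplicative_zmod_two_cases b with rfl | rfl <;>
      simp [← ofAdd_add, ht, show (1 : ZMod 2) + 1 = 0 from rfl]

theorem involutionHom_ofAdd_one (t : G) (ht : t * t = 1) :
    involutionHom t ht (Multiplicative.ofAdd 1) = t := rfl

theorem involutionHom_injective {t : G} (ht : t * t = 1) (ht1 : t ≠ 1) :
    Function.Injective (involutionHom t ht) := by
  refine (injective_iff_map_eq_one _).2 fun c hc ↦ ?_
  rcases multiplicative_zmod_two_cases c with rfl | rfl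
  · rfl
  · exact absurd ((involutionHom_ofAdd_one t ht).symm.trans hc) ht1

theorem mem_range_involutionHom {t : G} (ht : t * t = 1) {x : G} :
    x ∈ (involutionHom t ht).range ↔ x = 1 ∨ x = t := by
  constructor
  · rintro ⟨c, rfl⟩
    rcases multiplicative_zmod_two_cases c with rfl | rfl
    · exact Or.inl (map_one _)
    · exact Or.inr (involutionHom_ofAdd_one t ht)
  · rintro (rfl | rfl)
    · exact one_mem _
    · exact ⟨_, involutionHom_ofAdd_one x ht⟩

theorem wreathAction_ofAdd_one (p : ℕ) :
    wreathAction p (Multiplicative.ofAdd 1) = swapAut p := rfl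

/-- The homomorphism `C_p × C_p →* G` given by `f` on the first factor and by `f` followed by
conjugation by `t` on the second. -/
def baseHom {p : ℕ} (f : Multiplicative (ZMod p) →* G) (t : G)
    (hf : ∀ a b, Commute (f a) (t * f b * t⁻¹)) : CpCp p →* G :=
  f.noncommCoprod ((MulAut.conj t).toMonoidHom.comp f) hf

theorem baseHom_injective {p : ℕ} {f : Multiplicative (ZMod p) →* G} {t : G}
    (hf : ∀ a b, Commute (f a) (t * f b * t⁻¹)) (hinj : Function.Injective f)
    (hdisj : Disjoint f.range (MulAut.conj t • f.range)) : Function.Injective (baseHom f t hf) := by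
  refine (MonoidHom.noncommCoprod_injective _ _ _).2
    ⟨hinj, (MulAut.conj t).injective.comp hinj, ?_⟩
  rwa [MonoidHom.range_comp]

theorem range_baseHom {p : ℕ} {f : Multiplicative (ZMod p) →* G} {t : G}
    (hf : ∀ a b, Commute (f a) (t * f b * t⁻¹)) :
    (baseHom f t hf).range = f.range ⊔ MulAut.conj t • f.range :=
  (MonoidHom.noncommCoprod_range _ _ _).trans (by rw [MonoidHom.range_comp]; rfl)

theorem baseHom_comp_wreathAction {p : ℕ} {f : Multiplicative (ZMod p) →* G} {t : G}
    (hf : ∀ a b, Commute (f a) (t * f b * t⁻¹)) (ht : t * t = 1) (c : Multiplicative (ZMod 2)) :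
    (baseHom f t hf).comp (wreathAction p c).toMonoidHom =
      (MulAut.conj (involutionHom t ht c)).toMonoidHom.comp (baseHom f t hf) := by
  rcases multiplicative_zmod_two_cases c with rfl | rfl
  · simp only [map_one]
    rfl
  · rw [wreathAction_ofAdd_one, involutionHom_ofAdd_one]
    ext ⟨a, b⟩
    have htt : t⁻¹ = t := inv_eq_of_mul_eq_one_left ht
    calc f b * (t * f a * t⁻¹) = t * f a * t⁻¹ * f b := (hf b a).eq
      _ = t * (f a * (t⁻¹ * f b * t)) * t⁻¹ := by group
      _ = t * (f a * (t * f b * t⁻¹)) * t⁻¹ := by rw [htt]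

theorem nonempty_mulEquiv_wreathCpC2_s15 {p : ℕ} [Fact p.Prime] {H K : Subgroup G}
    [IsMulCommutative K] (hK : K.index = 2) (hH : Nat.card H = p) {t : G} (htK : t ∉ K)
    (ht : t * t = 1) (hdisj : Disjoint H (MulAut.conj t • H))
    (hsup : H ⊔ MulAut.conj t • H = K) : Nonempty (G ≃* WreathCpC2 p) := by
  let e : Multiplicative (ZMod p) ≃* H := mulEquivOfPrimeCardEq (p := p) (by simp) hH
  let f : Multiplicative (ZMod p) →* G := H.subtype.comp e.toMonoidHom
  have hfr : f.range = H := by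
    rw [MonoidHom.range_comp, MonoidHom.range_eq_top.2 e.surjective, ← MonoidHom.range_eq_map,
      H.range_subtype]
  have hf (a b) : Commute (f a) (t * f b * t⁻¹) :=
    setLike_mul_comm (s := K) (hsup ▸ Subgroup.mem_sup_left (e a).2)
      (hsup ▸ Subgroup.mem_sup_right ⟨e b, (e b).2, rfl⟩)
  have hbase : (baseHom f t hf).range = K := by rw [range_baseHom, hfr, hsup]
  have ht1 : t ≠ 1 := fun h ↦ htK (h ▸ one_mem K)
  have hKt : Disjoint K (involutionHom t ht).range := Subgroup.disjoint_def.2 fun hxK hxt ↦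
    ((mem_range_involutionHom ht).1 hxt).resolve_right fun h ↦ htK (h ▸ hxK)
  let Φ : WreathCpC2 p →* G := SemidirectProduct.lift (baseHom f t hf) (involutionHom t ht)
    (baseHom_comp_wreathAction hf ht)
  have hinj : Function.Injective Φ := by
    refine semidirectProduct_lift_injective _ (baseHom_injective hf ?_ (by rwa [hfr]))
      (involutionHom_injective ht ht1) (by rwa [hbase])
    exact Subtype.val_injective.comp e.injective
  have hsurj : Function.Surjective Φ := by
    refine MonoidHom.range_eq_top.1 ((range_semidirectProduct_lift _ _ _).trans ?_)
    rw [hbase]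
    refine sup_eq_of_prime_relIndex (by rw [K.relIndex_top_right, hK]; exact Nat.prime_two)
      le_top le_top fun h ↦ htK (h ((mem_range_involutionHom ht).2 (Or.inr rfl)))
  exact ⟨(MulEquiv.ofBijective Φ ⟨hinj, hsurj⟩).symm⟩

theorem nonempty_mulEquiv_wreathCpC2_of_le_sup_center {p : ℕ} (hp : p.Prime) {H K : Subgroup G}
    (hcore : H.normalCore = ⊥) (hH : H ≠ ⊥) (hHK : H ≤ K) (hK : K.index = 2)
    (hKH : H.relIndex K = p) (hKZ : K ≤ H ⊔ Subgroup.center G) :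
    Nonempty (G ≃* WreathCpC2 p) := by
  have : Fact p.Prime := ⟨hp⟩
  have hKn : K.Normal := Subgroup.normal_of_index_eq_two hK
  have hnorm : K ≤ Subgroup.normalizer H :=
    hKZ.trans (sup_le Subgroup.le_normalizer (Subgroup.center_le_normalizer _))
  have conj_le (s : G) : MulAut.conj s • H ≤ K :=
    hKn.conj_smul_eq_self s ▸ Subgroup.pointwise_smul_le_pointwise_smul_iff.2 hHK
  have disj {s : G} (hs : s ∉ K) : Disjoint H (MulAut.conj s • H) :=
    disjoint_iff_inf_le.2 (hcore ▸ inf_conj_smul_le_normalCore hK hnorm hs)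
  have sup_eq {s : G} (hs : s ∉ K) : H ⊔ MulAut.conj s • H = K := by
    refine sup_eq_of_prime_relIndex (hKH ▸ hp) hHK (conj_le s) fun h ↦ hH ?_
    rw [← inv_smul_smul (MulAut.conj s) H, (disj hs).eq_bot_of_ge h, Subgroup.smul_bot]
  have subset_mul {s : G} (hs : s ∉ K) : (K : Set G) ⊆ H * (MulAut.conj s • H : Subgroup G) := by
    rw [← Subgroup.coe_mul_of_right_le_normalizer_left _ _ ((conj_le s).trans hnorm), sup_eq hs]
  obtain ⟨s, hs⟩ : ∃ s, s ∉ K :=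
    SetLike.exists_not_mem_of_ne_top K fun h ↦ by simp [h] at hK
  have hcard : Nat.card H = p := by
    rw [Nat.card_congr (Subgroup.equivSMul (MulAut.conj s) H).toEquiv, ← hKH]
    exact card_eq_relIndex_of_disjoint_of_subset_mul (conj_le s) (disj hs) (subset_mul hs)
  have : IsMulCommutative H := isMulCommutative_of_prime_card (hcard ▸ hp)
  have : IsMulCommutative K := isMulCommutative_of_le_sup_center hKZ
  obtain ⟨t, htK, ht⟩ := exists_mul_self_eq_one_of_conj_smul hK hHK hs (disj hs) (subset_mul hs)
  exact nonempty_mulEquiv_wreathCpC2_s15 hK hcard htK ht (disj htK) (sup_eq htK)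

theorem stmt_15_general {p : ℕ} (hp : p.Prime) {H K : Subgroup G} {T : Set G}
    (hHT : (H : Set G) * T = Set.univ) (hcore : H.normalCore = ⊥)
    (hgen : Subgroup.closure T = ⊤) (hHK : H ≤ K) (hGK : K.index = 2) (hKH : H.relIndex K = p)
    (hHne : H ≠ ⊥)
    (hcomm : T \ K ⊆ Subgroup.centralizer (Subgroup.closure (T ∩ K) : Set G)) :
    H ⊓ Subgroup.closure (T ∩ K) = ⊥ ∧
    Subgroup.closure (T ∩ K) ≤ Subgroup.center G ∧
    Nonempty (G ≃* WreathCpC2 p) := by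
  set A := Subgroup.closure (T ∩ K)
  have hAK : A ≤ K := (Subgroup.closure_le K).2 Set.inter_subset_right
  have hK : K ≠ ⊤ := fun h ↦ by simp [h] at hGK
  have hHA : H ⊓ A = ⊥ := le_bot_iff.1 <| hcore ▸ inf_le_normalCore_of_mul_centralizer_eq_univ
    (mul_subgroup_eq_univ_of_diff_subset hHK hK hHT hcomm)
  have hKHA : (K : Set G) ⊆ H * A := (subset_mul_inter_of_mul_eq_univ hHK hHT).trans
    (Set.mul_subset_mul_left Subgroup.subset_closure)
  have hcard : Nat.card A = p :=
    (card_eq_relIndex_of_disjoint_of_subset_mul hAK (disjoint_iff.2 hHA) hKHA).trans hKH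
  have : IsMulCommutative A := isMulCommutative_of_prime_card (hcard ▸ hp)
  have hAZ : A ≤ Subgroup.center G := le_center_of_closure_eq_top hgen fun t ht ↦ by
    by_cases htK : t ∈ K
    · exact A.le_centralizer (Subgroup.subset_closure ⟨ht, htK⟩)
    · exact hcomm ⟨ht, htK⟩
  have hKZ : K ≤ H ⊔ Subgroup.center G := by
    intro k hk
    obtain ⟨h, hh, a, ha, rfl⟩ := hKHA hk
    exact Subgroup.mul_mem_sup hh (hAZ ha)
  exact ⟨hHA, hAZ,
    nonempty_mulEquiv_wreathCpC2_of_le_sup_center hp hcore hHne hHK hGK hKH hKZ⟩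

end

/-- Case 1: if `H ≠ 1` and every `s ∈ T \\ K` commutes with all of `K₁ := ⟨T ∩ K⟩`, then
`H₁ = H ⊓ K₁ = 1`, `K₁ ≤ Z(G)`, and `G ≅ C_p ≀ C_2`. -/
theorem stmt_15 {G : Type*} [Group G] [Finite G] (p : ℕ) (hp : p.Prime) (hodd : Odd p)
    (H K : Subgroup G) (T : Set G)
    (hLF : IsLoopFolder H T) (hRCC : IsRCC T) (hFaith : IsFaithfulFolder H)
    (hord : Nat.card T = 2 * p) (hgen : Subgroup.closure T = ⊤)
    (hHK : H ≤ K) (hGK : K.index = 2) (hKH : H.relIndex K = p)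
    (hHne : H ≠ ⊥)
    (hcomm : ∀ s ∈ T, s ∉ K → ∀ x ∈ Subgroup.closure (T ∩ (K : Set G)), s * x = x * s) :
    H ⊓ Subgroup.closure (T ∩ (K : Set G)) = ⊥ ∧
    Subgroup.closure (T ∩ (K : Set G)) ≤ Subgroup.center G ∧
    Nonempty (G ≃* WreathCpC2 p) := by
  exact stmt_15_general hp hLF.mul_eq_univ hFaith.normalCore_eq_bot hgen hHK hGK hKH hHne
    fun s hs x hx ↦ (hcomm s hs.1 hs.2 x hx).symm
end

section
/- Let p be an odd prime, let (G, H, T) be a faithful RCC loop folder of order 2p with ⟨T⟩ = G, and let K be a subgroup of G with H ≤ K ≤ G, |G : K| = 2 and |K : H| = p. Set T₁ := T ∩ K, K₁ := ⟨T₁⟩ and H₁ := H ∩ K₁. Assume there exists s ∈ T with s ∉ K that does not commute with all elements of K₁, and set Z := K₁ ∩ C_G(s). Then: (a) |G : C_G(s)| = p and |Z| = |H₁|; (b) G = C_G(s)·K₁ and Z is contained in the center of G; (c) C_G(s) is abelian and the quotient group C_G(s)/Z is cyclic. -/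
open Pointwise

/-!
An element of `p`-power order fixes every point of a conjugacy class with fewer than `p` elements,
because its orbits have `p`-power size. Each element of `T ∩ K` lies in such a class, hence every
`p`-subgroup of `G` centralizes `K₁`. A Sylow `p`-subgroup of `K₁` is therefore central, so it
normalizes `H₁`; since `H₁` has index `p` in `K₁`, it is maximal and does not contain that Sylow
subgroup, hence is normal. Thus `H₁` contains all `p`-th powers of `K₁`. As the core of `H` is
trivial, `K₁` has exponent `p`, and so it is abelian. The class of `s` lies in `T \ K`, of size
`p`, and `K₁` moves `s`, so `T \ K` is a single `K₁`-orbit. Hence `G = K₁⟨s⟩`, from which the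
structure of `C_G(s)` is read off.
-/

section

open Subgroup

variable {G : Type*} [Group G]

theorem ncard_conjugatesOf (g : G) : (conjugatesOf g).ncard = (centralizer {g}).index := by
  have hindex := MulAction.index_stabilizer (ConjAct G) g
  rw [ConjAct.stabilizer_eq_centralizer, ConjAct.orbit_eq_carrier_conjClasses] at hindex
  exact hindex.symm

theorem relIndex_le_index (A B : Subgroup G) [A.FiniteIndex] : A.relIndex B ≤ A.index := by
  rw [← relIndex_top_right]
  exact relIndex_le_of_le_right le_top (relIndex_top_right A ▸ FiniteIndex.index_ne_zero)

theorem sup_eq_top_of_relIndex_eq_index {A B : Subgroup G} [A.FiniteIndex]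
    (h : A.relIndex B = A.index) : A ⊔ B = ⊤ := by
  have : A.IsFiniteRelIndex (A ⊔ B) := isFiniteRelIndex_of_finiteIndex
  have hle : A.index ≤ A.relIndex (A ⊔ B) :=
    h ▸ relIndex_le_of_le_right le_sup_right relIndex_ne_zero
  have hmul := relIndex_mul_index (le_sup_left : A ≤ A ⊔ B)
  have hpos : 0 < A.index := Nat.pos_of_ne_zero FiniteIndex.index_ne_zero
  rw [hle.antisymm' (relIndex_le_index A _)] at hmul
  exact index_eq_one.1 (Nat.eq_of_mul_eq_mul_left hpos (hmul.trans (mul_one _).symm))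

theorem card_inf_eq_of_relIndex_eq {A B N : Subgroup G} [A.IsFiniteRelIndex N]
    (h : A.relIndex N = B.relIndex N) :
    Nat.card (A ⊓ N : Subgroup G) = Nat.card (B ⊓ N : Subgroup G) := by
  have hmul (D : Subgroup G) : Nat.card (D ⊓ N : Subgroup G) * D.relIndex N = Nat.card N := by
    simpa only [relIndex_bot_left, inf_relIndex_right] using
      relIndex_mul_relIndex ⊥ (D ⊓ N) N bot_le inf_le_right
  have hpos : 0 < A.relIndex N := Nat.pos_of_ne_zero relIndex_ne_zero
  exact Nat.eq_of_mul_eq_mul_right hpos ((hmul A).trans (h ▸ (hmul B).symm))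

section PGroup

variable {p : ℕ} [Fact p.Prime]

theorem le_relIndex_of_isPGroup_of_not_le {A P : Subgroup G} [A.IsFiniteRelIndex P]
    (hP : IsPGroup p P) (h : ¬ P ≤ A) : p ≤ A.relIndex P := by
  obtain ⟨n, hn⟩ := hP.index (A.subgroupOf P)
  have hn : A.relIndex P = p ^ n := hn
  have hn0 : n ≠ 0 := by
    rintro rfl
    exact h (relIndex_eq_one.1 hn)
  exact hn ▸ Nat.le_self_pow hn0 p

theorem le_centralizer_closure_of_isPGroup_of_relIndex_lt {S : Set G} {P : Subgroup G}
    [Finite P] (hP : IsPGroup p P) (hS : ∀ t ∈ S, (centralizer {t}).relIndex P < p) :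
    P ≤ centralizer (closure S : Set G) := by
  rw [centralizer_closure]
  intro x hx t ht
  by_contra hxt
  have : (centralizer {t}).IsFiniteRelIndex P := isFiniteRelIndex_iff_finiteIndex.2 inferInstance
  have hPt : ¬ P ≤ centralizer {t} := fun h ↦
    hxt (mem_centralizer_singleton_iff.1 (h hx)).symm
  exact (le_relIndex_of_isPGroup_of_not_le hP hPt).not_gt (hS t ht)

theorem normal_of_index_eq_prime_of_not_center_le {M : Subgroup G} (hM : M.index = p)
    (h : ¬ center G ≤ M) : M.Normal := by
  have hmul := relIndex_mul_index (le_normalizer : M ≤ normalizer (M : Set G))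
  rw [hM] at hmul
  rcases (Nat.dvd_prime Fact.out).1 (Dvd.intro _ hmul) with h1 | hp
  · exact absurd ((center_le_normalizer _).trans (relIndex_eq_one.1 h1)) h
  · rw [hp, Nat.mul_eq_left (Nat.Prime.ne_zero Fact.out), index_eq_one] at hmul
    exact normalizer_eq_top_iff.1 hmul

theorem normal_of_index_eq_prime_of_sylow_le_center {M : Subgroup G} (hM : M.index = p)
    (P : Sylow p G) [P.FiniteIndex] (hP : (P : Subgroup G) ≤ center G) : M.Normal :=
  normal_of_index_eq_prime_of_not_center_le hM fun h ↦
    P.not_dvd_index (hM.symm.dvd.trans (index_dvd_of_le (hP.trans h)))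

end PGroup

section SupZPowers

variable {N : Subgroup G} {s : G}

theorem conjugatesOf_subset_sup_zpowers [N.Normal] (h : centralizer {s} ⊔ N = ⊤) :
    conjugatesOf s ⊆ (N ⊔ zpowers s : Subgroup G) := by
  intro t hst
  obtain ⟨g, rfl⟩ := isConj_iff.1 hst
  have hg : g ∈ N ⊔ centralizer {s} := by
    rw [sup_comm, h]
    exact mem_top g
  obtain ⟨n, hn, c, hc, rfl⟩ := mem_sup_of_normal_left.1 hg
  have hconj : n * c * s * (n * c)⁻¹ = n * s * n⁻¹ := by
    rw [mul_assoc n c s, mem_centralizer_singleton_iff.1 hc]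
    group
  have hn' : n ∈ N ⊔ zpowers s := mem_sup_left hn
  rw [hconj]
  exact mul_mem (mul_mem hn' (mem_sup_right (mem_zpowers s))) (inv_mem hn')

theorem inf_centralizer_le_center (hN : N ≤ centralizer (N : Set G)) (h : N ⊔ zpowers s = ⊤) :
    N ⊓ centralizer {s} ≤ center G := by
  rintro z ⟨hzN, hzs⟩
  have htop : ⊤ ≤ centralizer {z} := h ▸ sup_le
    (fun n hn ↦ mem_centralizer_singleton_iff.2 (hN hzN n hn))
    (zpowers_le.2 (mem_centralizer_singleton_iff.2 (mem_centralizer_singleton_iff.1 hzs).symm))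
  exact mem_center_iff.2 fun g ↦ mem_centralizer_singleton_iff.1 (htop (mem_top g))

theorem exists_eq_mul_zpow_of_mem_centralizer [N.Normal] (h : N ⊔ zpowers s = ⊤) {x : G}
    (hx : x ∈ centralizer {s}) : ∃ z ∈ N ⊓ centralizer {s}, ∃ k : ℤ, x = z * s ^ k := by
  obtain ⟨z, hz, _, ⟨k, rfl⟩, rfl⟩ := mem_sup_of_normal_left.1 (h ▸ mem_top x)
  have hs : s ^ k ∈ centralizer {s} := zpow_mem (mem_centralizer_singleton_iff.2 rfl) k
  exact ⟨z, ⟨hz, (mul_mem_cancel_right hs).1 hx⟩, k, rfl⟩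

theorem commute_of_mem_centralizer [N.Normal] (hN : N ≤ centralizer (N : Set G))
    (h : N ⊔ zpowers s = ⊤) {a b : G} (ha : a ∈ centralizer {s}) (hb : b ∈ centralizer {s}) :
    Commute a b := by
  obtain ⟨z, hz, k, rfl⟩ := exists_eq_mul_zpow_of_mem_centralizer h ha
  have hzb : Commute z b := (mem_center_iff.1 (inf_centralizer_le_center hN h hz) b).symm
  have hsb : Commute s b := (mem_centralizer_singleton_iff.1 hb).symm
  exact hzb.mul_left (hsb.zpow_left k)

end SupZPowers

section Folder

variable {H : Subgroup G}

theorem IsLoopFolder.ncard_inter_eq_relIndex_of_subset {T : Set G} (hLF : IsLoopFolder H T)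
    {K L : Subgroup G} (hHK : H ≤ K) (hLK : L ≤ K) (hTL : T ∩ (K : Set G) ⊆ L) :
    (T ∩ (K : Set G)).ncard = H.relIndex L := by
  have hT (x : G) : ∃! t, t ∈ T ∧ x * t⁻¹ ∈ H := by simpa using hLF.2 1 x
  -- Inverting turns the right cosets of the folder into the left cosets of the quotient.
  let toQuotient (t : (T ∩ (K : Set G) : Set G)) : L ⧸ H.subgroupOf L :=
    QuotientGroup.mk (⟨t, hTL t.2⟩⁻¹ : L)
  have hmk (t : (T ∩ (K : Set G) : Set G)) (x : L) :
      toQuotient t = QuotientGroup.mk x⁻¹ ↔ (t : G) * (x : G)⁻¹ ∈ H := by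
    simp [toQuotient, QuotientGroup.eq, mem_subgroupOf]
  refine Nat.card_eq_of_bijective toQuotient ⟨fun a b hab ↦ ?_, fun q ↦ ?_⟩
  · exact Subtype.ext <| (hT a).unique ⟨a.2.1, by simp⟩ ⟨b.2.1, (hmk a ⟨b, hTL b.2⟩).1 hab⟩
  · obtain ⟨x, rfl⟩ := QuotientGroup.mk_surjective q
    obtain ⟨t, ⟨ht, hxt⟩, -⟩ := hT (x : G)⁻¹
    have htK : t ∈ K :=
      inv_mem_iff.1 ((K.mul_mem_cancel_left (K.inv_mem (hLK x.2))).1 (hHK hxt))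
    refine ⟨⟨t, ht, htK⟩, ?_⟩
    rw [← inv_inv x, hmk]
    simpa using H.inv_mem hxt

theorem IsLoopFolder.ncard_inter_eq_relIndex {T : Set G} (hLF : IsLoopFolder H T) {K : Subgroup G}
    (hHK : H ≤ K) : (T ∩ (K : Set G)).ncard = H.relIndex K :=
  hLF.ncard_inter_eq_relIndex_of_subset hHK le_rfl Set.inter_subset_right

theorem IsLoopFolder.relIndex_closure_inter {T : Set G} (hLF : IsLoopFolder H T) {K : Subgroup G}
    (hHK : H ≤ K) : H.relIndex (closure (T ∩ (K : Set G))) = H.relIndex K := by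
  have hle : closure (T ∩ (K : Set G)) ≤ K := (closure_le _).2 Set.inter_subset_right
  rw [← hLF.ncard_inter_eq_relIndex_of_subset hHK hle subset_closure,
    hLF.ncard_inter_eq_relIndex hHK]

theorem IsFaithfulFolder.pow_relIndex_eq_one (hF : IsFaithfulFolder H) {N : Subgroup G}
    [hN : N.Normal] [(H.subgroupOf N).Normal] {x : G} (hx : x ∈ N) : x ^ H.relIndex N = 1 :=
  hF _ fun g ↦ conj_pow (a := g) ▸
    mem_subgroupOf.1 (pow_index_mem (H.subgroupOf N) ⟨g * x * g⁻¹, hN.conj_mem x hx g⟩)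

theorem IsFaithfulFolder.isPGroup_of_sylow_le_center (hF : IsFaithfulFolder H) {p : ℕ}
    [Fact p.Prime] {N : Subgroup G} [N.Normal] (hN : H.relIndex N = p) (P : Sylow p N)
    [P.FiniteIndex] (hP : (P : Subgroup N) ≤ center N) : IsPGroup p N := by
  have : (H.subgroupOf N).Normal := normal_of_index_eq_prime_of_sylow_le_center hN P hP
  exact fun x ↦ ⟨1, Subtype.ext (by simpa [hN] using hF.pow_relIndex_eq_one x.2)⟩

end Folder

section RCC

variable {S T : Set G}

theorem isRCC_coe (N : Subgroup G) [hN : N.Normal] : IsRCC (N : Set G) :=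
  fun n hn g ↦ hN.conj_mem' n hn g

theorem IsRCC.inter (hS : IsRCC S) (hT : IsRCC T) : IsRCC (S ∩ T) :=
  fun t ht g ↦ ⟨hS t ht.1 g, hT t ht.2 g⟩

theorem IsRCC.sdiff (hS : IsRCC S) (hT : IsRCC T) : IsRCC (S \ T) :=
  fun t ht g ↦ ⟨hS t ht.1 g, fun h ↦ ht.2 (by simpa [mul_assoc] using hT _ h g⁻¹)⟩

theorem IsRCC.conjugatesOf_subset (hS : IsRCC S) {t : G} (ht : t ∈ S) : conjugatesOf t ⊆ S := by
  intro u htu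
  obtain ⟨g, rfl⟩ := isConj_iff.1 htu
  simpa only [inv_inv] using hS t ht g⁻¹

theorem IsRCC.closure_normal (hS : IsRCC S) : (closure S).Normal := by
  have hclosure : closure S = normalClosure S :=
    closure_le_normalClosure.antisymm <| closure_mono <| Set.iUnion₂_subset fun _ ↦
      hS.conjugatesOf_subset
  exact hclosure ▸ normalClosure_normal

theorem IsRCC.index_centralizer_le_ncard (hS : IsRCC S) (hfin : S.Finite) {t : G} (ht : t ∈ S) :
    (centralizer {t}).index ≤ S.ncard :=
  ncard_conjugatesOf t ▸ Set.ncard_le_ncard (hS.conjugatesOf_subset ht) hfin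

theorem IsRCC.finiteIndex_centralizer (hS : IsRCC S) (hfin : S.Finite) {t : G} (ht : t ∈ S) :
    (centralizer {t}).FiniteIndex := by
  have hclass : (conjugatesOf t).Finite := hfin.subset (hS.conjugatesOf_subset ht)
  rw [finiteIndex_iff, ← ncard_conjugatesOf]
  exact Set.ncard_ne_zero_of_mem mem_conjugatesOf_self hclass

theorem IsRCC.conjugatesOf_eq (hS : IsRCC S) (hfin : S.Finite) {t : G} (ht : t ∈ S)
    (hindex : (centralizer {t}).index = S.ncard) : conjugatesOf t = S :=
  Set.eq_of_subset_of_ncard_le (hS.conjugatesOf_subset ht)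
    (hindex ▸ (ncard_conjugatesOf t).ge) hfin

theorem IsRCC.index_centralizer_lt_ncard (hS : IsRCC S) (h1 : 1 ∈ S) (hcard : 1 < S.ncard) {t : G}
    (ht : t ∈ S) : (centralizer {t}).index < S.ncard := by
  have hfin : S.Finite := Set.finite_of_ncard_pos (zero_lt_one.trans hcard)
  refine (hS.index_centralizer_le_ncard hfin ht).lt_of_ne fun hindex ↦ ?_
  have hclass : conjugatesOf t = S := hS.conjugatesOf_eq hfin ht hindex
  obtain rfl : t = 1 := isConj_one_left.1 (hclass ▸ h1 : (1 : G) ∈ conjugatesOf t)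
  obtain ⟨u, hu, hu1⟩ := Set.exists_ne_of_one_lt_ncard hcard 1
  exact hu1 (isConj_one_right.1 (hclass ▸ hu : u ∈ conjugatesOf 1))

section PGroup

variable {p : ℕ} [Fact p.Prime]

theorem IsRCC.le_centralizer_closure_of_isPGroup (hS : IsRCC S) (h1 : 1 ∈ S) (hcard : S.ncard = p)
    {P : Subgroup G} [Finite P] (hP : IsPGroup p P) : P ≤ centralizer (closure S : Set G) := by
  have hp : p.Prime := Fact.out
  have hfin : S.Finite := Set.finite_of_ncard_ne_zero (hcard ▸ hp.ne_zero)
  refine le_centralizer_closure_of_isPGroup_of_relIndex_lt hP fun t ht ↦ ?_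
  have : (centralizer {t}).FiniteIndex := hS.finiteIndex_centralizer hfin ht
  exact (relIndex_le_index _ P).trans_lt
    (hcard ▸ hS.index_centralizer_lt_ncard h1 (hcard ▸ hp.one_lt) ht)

theorem IsRCC.isPGroup_closure (hS : IsRCC S) (h1 : 1 ∈ S) (hcard : S.ncard = p)
    [Finite (closure S)] {H : Subgroup G} (hF : IsFaithfulFolder H)
    (hH : H.relIndex (closure S) = p) : IsPGroup p (closure S) := by
  have : (closure S).Normal := hS.closure_normal
  let P : Sylow p (closure S) := default
  have : Finite ((P : Subgroup (closure S)).map (closure S).subtype) :=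
    ((P : Set (closure S)).toFinite.image _).to_subtype
  have hcentral : (P : Subgroup (closure S)).map (closure S).subtype ≤ centralizer (closure S) :=
    hS.le_centralizer_closure_of_isPGroup h1 hcard (P.isPGroup'.map _)
  exact hF.isPGroup_of_sylow_le_center hH P fun x hx ↦ mem_center_iff.2 fun y ↦
    Subtype.ext (hcentral (mem_map_of_mem _ hx) y y.2)

theorem IsRCC.relIndex_centralizer_eq_and_index_centralizer_eq (hS : IsRCC S) (hcard : S.ncard = p)
    {s : G} (hs : s ∈ S) {N : Subgroup G} (hN : IsPGroup p N) (hNs : ¬ N ≤ centralizer {s}) :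
    (centralizer {s}).relIndex N = p ∧ (centralizer {s}).index = p := by
  have hfin : S.Finite := Set.finite_of_ncard_ne_zero (hcard ▸ Nat.Prime.ne_zero Fact.out)
  have : (centralizer {s}).FiniteIndex := hS.finiteIndex_centralizer hfin hs
  have : (centralizer {s}).IsFiniteRelIndex N := isFiniteRelIndex_of_finiteIndex
  have hlower : p ≤ (centralizer {s}).relIndex N := le_relIndex_of_isPGroup_of_not_le hN hNs
  have hmiddle : (centralizer {s}).relIndex N ≤ (centralizer {s}).index := relIndex_le_index _ N
  have hupper : (centralizer {s}).index ≤ p := hcard ▸ hS.index_centralizer_le_ncard hfin hs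
  exact ⟨(hmiddle.trans hupper).antisymm hlower, hupper.antisymm (hlower.trans hmiddle)⟩

theorem IsRCC.sup_zpowers_eq_top (hS : IsRCC S) (hcard : S.ncard = p) {s : G} (hs : s ∈ S)
    {N : Subgroup G} [N.Normal] (hN : IsPGroup p N) (hNs : ¬ N ≤ centralizer {s})
    (hgen : N ⊔ closure S = ⊤) : N ⊔ zpowers s = ⊤ := by
  obtain ⟨hrelIndex, hindex⟩ :=
    hS.relIndex_centralizer_eq_and_index_centralizer_eq hcard hs hN hNs
  have hfin : S.Finite := Set.finite_of_ncard_ne_zero (hcard ▸ Nat.Prime.ne_zero Fact.out)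
  have : (centralizer {s}).FiniteIndex := hS.finiteIndex_centralizer hfin hs
  have hsup : centralizer {s} ⊔ N = ⊤ :=
    sup_eq_top_of_relIndex_eq_index (hrelIndex.trans hindex.symm)
  have hSle : closure S ≤ N ⊔ zpowers s := by
    rw [closure_le, ← hS.conjugatesOf_eq hfin hs (hindex.trans hcard.symm)]
    exact conjugatesOf_subset_sup_zpowers hsup
  exact top_le_iff.1 (hgen ▸ sup_le le_sup_left hSle)

end PGroup

end RCC

end

/-- Case 2 properties: if some `s ∈ T \\ K` does not centralize `K₁ := ⟨T ∩ K⟩`, then with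
`Z := K₁ ⊓ C_G(s)`: (a) `|G : C_G(s)| = p` and `|Z| = |H₁|`; (b) `G = C_G(s)K₁` and
`Z ≤ Z(G)`; (c) `C_G(s)` is abelian and `C_G(s)/Z` is cyclic. -/
theorem stmt_16 {G : Type*} [Group G] [Finite G] (p : ℕ) (hp : p.Prime) (hodd : Odd p)
    (H K : Subgroup G) (T : Set G)
    (hLF : IsLoopFolder H T) (hRCC : IsRCC T) (hFaith : IsFaithfulFolder H)
    (hord : Nat.card T = 2 * p) (hgen : Subgroup.closure T = ⊤)
    (hHK : H ≤ K) (hGK : K.index = 2) (hKH : H.relIndex K = p)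
    (s : G) (hs : s ∈ T) (hsK : s ∉ K)
    (hsnc : ¬ ∀ x ∈ Subgroup.closure (T ∩ (K : Set G)), s * x = x * s) :
    (Subgroup.centralizer {s}).index = p ∧
    Nat.card (Subgroup.closure (T ∩ (K : Set G)) ⊓ Subgroup.centralizer {s} : Subgroup G) =
      Nat.card (H ⊓ Subgroup.closure (T ∩ (K : Set G)) : Subgroup G) ∧
    (Subgroup.centralizer {s} : Set G) * (Subgroup.closure (T ∩ (K : Set G)) : Set G) =
      Set.univ ∧
    Subgroup.closure (T ∩ (K : Set G)) ⊓ Subgroup.centralizer {s} ≤ Subgroup.center G ∧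
    (∀ a ∈ Subgroup.centralizer ({s} : Set G), ∀ b ∈ Subgroup.centralizer ({s} : Set G),
      a * b = b * a) ∧
    (∃ c ∈ Subgroup.centralizer ({s} : Set G), ∀ x ∈ Subgroup.centralizer ({s} : Set G),
      ∃ z ∈ Subgroup.closure (T ∩ (K : Set G)) ⊓ Subgroup.centralizer {s},
        ∃ k : ℤ, x = z * c ^ k) := by
  have : Fact p.Prime := ⟨hp⟩
  have : K.Normal := Subgroup.normal_of_index_eq_two hGK
  set K₁ := Subgroup.closure (T ∩ (K : Set G))
  set C := Subgroup.centralizer ({s} : Set G)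
  have hT₁ : IsRCC (T ∩ (K : Set G)) := hRCC.inter (isRCC_coe K)
  have hS : IsRCC (T \ (K : Set G)) := hRCC.sdiff (isRCC_coe K)
  have : K₁.Normal := hT₁.closure_normal
  have hcardT₁ : (T ∩ (K : Set G)).ncard = p := (hLF.ncard_inter_eq_relIndex hHK).trans hKH
  have hcardS : (T \ (K : Set G)).ncard = p := by
    have hcardT : T.ncard = 2 * p := hord
    have hsum := Set.ncard_inter_add_ncard_sdiff_eq_ncard T (K : Set G) T.toFinite
    omega
  have hHK₁ : H.relIndex K₁ = p := (hLF.relIndex_closure_inter hHK).trans hKH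
  have h1 : 1 ∈ T ∩ (K : Set G) := ⟨hLF.1, K.one_mem⟩
  have hK₁ : IsPGroup p K₁ := hT₁.isPGroup_closure h1 hcardT₁ hFaith hHK₁
  have hab : K₁ ≤ Subgroup.centralizer K₁ := hT₁.le_centralizer_closure_of_isPGroup h1 hcardT₁ hK₁
  have hK₁C : ¬ K₁ ≤ C := fun h ↦
    hsnc fun x hx ↦ (Subgroup.mem_centralizer_singleton_iff.1 (h hx)).symm
  obtain ⟨hCK₁, hC⟩ : C.relIndex K₁ = p ∧ C.index = p :=
    hS.relIndex_centralizer_eq_and_index_centralizer_eq hcardS ⟨hs, hsK⟩ hK₁ hK₁C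
  have htop : K₁ ⊔ Subgroup.zpowers s = ⊤ := hS.sup_zpowers_eq_top hcardS ⟨hs, hsK⟩ hK₁ hK₁C <| by
    rw [← Subgroup.closure_union, Set.inter_union_sdiff, hgen]
  have : C.IsFiniteRelIndex K₁ := Subgroup.isFiniteRelIndex_of_finiteIndex
  refine ⟨hC, inf_comm K₁ C ▸ card_inf_eq_of_relIndex_eq (hCK₁.trans hHK₁.symm), ?_,
    inf_centralizer_le_center hab htop,
    fun a ha b hb ↦ commute_of_mem_centralizer hab htop ha hb,
    s, Subgroup.mem_centralizer_singleton_iff.2 rfl,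
    fun x hx ↦ exists_eq_mul_zpow_of_mem_centralizer htop hx⟩
  rw [← Subgroup.mul_normal, sup_eq_top_of_relIndex_eq_index (hCK₁.trans hC.symm), Subgroup.coe_top]
end

section
/- Let q be an odd prime, let (G, H, T) be a faithful RCC loop folder of order 2q with ⟨T⟩ = G, and let K be a subgroup of G with H ≤ K ≤ G, |K : H| = 2 and |G : K| = q. If K is normal in G, then G is abelian and H = 1. -/
/-!
For `t ∈ T` and `k ∈ K` put `u = ⁅k, t⁆`. The conjugates `u * t` and `t * u` of `t` lie in the same
coset of `K` as `t`, while a coset of `K` contains at most `|K : H| = 2` elements of `T`; so two of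
`t * u`, `t`, `u * t` coincide, and in each case `u` commutes with `t`. Hence
`u ^ n = ⁅k, t ^ n⁆` for all `n`. By faithfulness squares of elements of `K` are trivial, so `K` is
abelian and `u ^ 2 = 1`; for `n = |G : K|`, where `t ^ n ∈ K`, also `u ^ n = 1`. As `n` is odd,
`u = 1`. Thus `K` is central, `H` is trivial, and the same comparison of exponents for arbitrary
commutators shows that `G` is abelian once `G ⧸ K` is.
-/

open scoped commutatorElement

section Commutator

variable {G : Type*} [Group G] {x g : G}

theorem commutatorElement_pow_right_of_commute (h : Commute ⁅x, g⁆ g) (n : ℕ) :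
    ⁅x, g ^ n⁆ = ⁅x, g⁆ ^ n := by
  have hconj : x * g * x⁻¹ = ⁅x, g⁆ * g := by rw [commutatorElement_def, inv_mul_cancel_right]
  rw [commutatorElement_def, ← conj_pow, hconj, h.mul_pow, mul_inv_cancel_right]

theorem commute_of_commutatorElement_pow_eq_one {m n : ℕ} (hmn : m.Coprime n)
    (h : Commute ⁅x, g⁆ g) (hm : ⁅x, g⁆ ^ m = 1) (hn : Commute x (g ^ n)) : Commute x g := by
  have hn' : ⁅x, g⁆ ^ n = 1 := by
    rw [← commutatorElement_pow_right_of_commute h, commutatorElement_eq_one_iff_commute.2 hn]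
  exact commutatorElement_eq_one_iff_commute.1 ((pow_eq_one_iff_of_coprime hmn).1 ⟨hm, hn'⟩)

theorem commutatorElement_mem_of_mem_left {N : Subgroup G} [N.Normal] (hx : x ∈ N) (g : G) :
    ⁅x, g⁆ ∈ N :=
  Subgroup.commutator_le_left N ⊤ (Subgroup.commutator_mem_commutator hx (Subgroup.mem_top g))

end Commutator

section LoopFolder

variable {G : Type*} [Group G] {H K : Subgroup G} {T : Set G}

theorem mul_mem_iff_of_relIndex_eq_two (hKH : H.relIndex K = 2) {a b : G} (ha : a ∈ K)
    (hb : b ∈ K) : a * b ∈ H ↔ (a ∈ H ↔ b ∈ H) :=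
  Subgroup.mul_mem_iff_of_index_two (H := H.subgroupOf K) hKH (a := ⟨a, ha⟩) (b := ⟨b, hb⟩)

theorem IsFaithfulFolder.eq_bot_of_le_center (hFaith : IsFaithfulFolder H)
    (hH : H ≤ Subgroup.center G) : H = ⊥ := by
  refine (Subgroup.eq_bot_iff_forall H).2 fun x hx => hFaith x fun g => ?_
  rwa [Subgroup.mem_center_iff.1 (hH hx) g, mul_inv_cancel_right]

theorem IsFaithfulFolder.sq_eq_one_of_mem [K.Normal] (hFaith : IsFaithfulFolder H)
    (hKH : H.relIndex K = 2) {k : G} (hk : k ∈ K) : k ^ 2 = 1 := by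
  refine hFaith _ fun g => ?_
  have hconj : g * k * g⁻¹ ∈ K := Subgroup.Normal.conj_mem ‹_› k hk g
  rw [← conj_pow, sq]
  exact (mul_mem_iff_of_relIndex_eq_two hKH hconj hconj).2 Iff.rfl

theorem IsFaithfulFolder.commute_of_mem [K.Normal] (hFaith : IsFaithfulFolder H)
    (hKH : H.relIndex K = 2) {a b : G} (ha : a ∈ K) (hb : b ∈ K) : Commute a b := by
  have hK : ∀ k : K, orderOf k ∣ 2 := fun k =>
    orderOf_dvd_of_pow_eq_one (Subtype.ext (hFaith.sq_eq_one_of_mem hKH k.2))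
  exact (Commute.of_orderOf_dvd_two hK ⟨a, ha⟩ ⟨b, hb⟩).map K.subtype

theorem IsLoopFolder.eq_of_mul_inv_mem (hLF : IsLoopFolder H T) {s t : G} (hs : s ∈ T)
    (ht : t ∈ T) (h : s * t⁻¹ ∈ H) : s = t :=
  (hLF.2 1 s).unique ⟨hs, by simp⟩ ⟨ht, by simpa using h⟩

theorem IsLoopFolder.eq_or_eq_or_eq_of_mul_inv_mem (hLF : IsLoopFolder H T)
    (hKH : H.relIndex K = 2) {a b c : G} (ha : a ∈ T) (hb : b ∈ T) (hc : c ∈ T)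
    (hab : a * b⁻¹ ∈ K) (hbc : b * c⁻¹ ∈ K) : a = b ∨ b = c ∨ a = c := by
  have hmul : a * c⁻¹ ∈ H ↔ (a * b⁻¹ ∈ H ↔ b * c⁻¹ ∈ H) := by
    simpa only [← mul_assoc, inv_mul_cancel_right] using
      mul_mem_iff_of_relIndex_eq_two hKH hab hbc
  have hcases : a * b⁻¹ ∈ H ∨ b * c⁻¹ ∈ H ∨ a * c⁻¹ ∈ H := by tauto
  exact hcases.imp (hLF.eq_of_mul_inv_mem ha hb)
    (Or.imp (hLF.eq_of_mul_inv_mem hb hc) (hLF.eq_of_mul_inv_mem ha hc))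

theorem IsRCC.conj_mem (hRCC : IsRCC T) {t : G} (ht : t ∈ T) (g : G) : g * t * g⁻¹ ∈ T := by
  simpa only [inv_inv] using hRCC t ht g⁻¹

theorem IsLoopFolder.commute_commutatorElement [K.Normal] (hLF : IsLoopFolder H T)
    (hRCC : IsRCC T) (hKH : H.relIndex K = 2) {k t : G} (hk : k ∈ K) (ht : t ∈ T) :
    Commute ⁅k, t⁆ t := by
  set u := ⁅k, t⁆ with hu
  have huK : u ∈ K := commutatorElement_mem_of_mem_left hk t
  have hutT : u * t ∈ T := by
    simpa only [hu, commutatorElement_def, inv_mul_cancel_right] using hRCC.conj_mem ht k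
  have htuT : t * u ∈ T := by
    simpa only [← mul_assoc, mul_inv_cancel_right] using hRCC.conj_mem hutT t
  have htuK : t * u * t⁻¹ ∈ K := Subgroup.Normal.conj_mem ‹_› u huK t
  have hutK : t * (u * t)⁻¹ ∈ K := by
    rw [mul_inv_rev, mul_inv_cancel_left]
    exact K.inv_mem huK
  rcases hLF.eq_or_eq_or_eq_of_mul_inv_mem hKH htuT ht hutT htuK hutK with h | h | h
  · rw [mul_eq_left.1 h]
    exact Commute.one_left t
  · rw [right_eq_mul.1 h]
    exact Commute.one_left t
  · exact h.symm

theorem IsLoopFolder.le_center_of_odd_index [K.Normal] (hLF : IsLoopFolder H T) (hRCC : IsRCC T)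
    (hFaith : IsFaithfulFolder H) (hgen : Subgroup.closure T = ⊤) (hKH : H.relIndex K = 2)
    (hodd : Odd K.index) : K ≤ Subgroup.center G := by
  rw [← Subgroup.centralizer_univ, ← Subgroup.coe_top, ← hgen, Subgroup.centralizer_closure]
  intro k hk
  refine Subgroup.mem_centralizer_iff.2 fun t ht => ?_
  have hu : ⁅k, t⁆ ∈ K := commutatorElement_mem_of_mem_left hk t
  exact (commute_of_commutatorElement_pow_eq_one hodd.coprime_two_left
    (hLF.commute_commutatorElement hRCC hKH hk ht) (hFaith.sq_eq_one_of_mem hKH hu)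
    (hFaith.commute_of_mem hKH hk (K.pow_index_mem t))).eq.symm

end LoopFolder

theorem stmt_18_general {G : Type*} [Group G] {H K : Subgroup G} {T : Set G} [K.Normal]
    [IsMulCommutative (G ⧸ K)] (hLF : IsLoopFolder H T) (hRCC : IsRCC T)
    (hFaith : IsFaithfulFolder H) (hgen : Subgroup.closure T = ⊤) (hHK : H ≤ K)
    (hKH : H.relIndex K = 2) (hodd : Odd K.index) :
    (∀ a b : G, a * b = b * a) ∧ H = ⊥ := by
  have hcenter : K ≤ Subgroup.center G := hLF.le_center_of_odd_index hRCC hFaith hgen hKH hodd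
  have hcomm : ∀ {k : G}, k ∈ K → ∀ g : G, Commute g k := fun hk =>
    Subgroup.mem_center_iff.1 (hcenter hk)
  refine ⟨fun a b => ?_, hFaith.eq_bot_of_le_center (hHK.trans hcenter)⟩
  have hab : ⁅a, b⁆ ∈ K :=
    Subgroup.Normal.quotient_commutative_iff_commutator_le.1 ‹_›
      (Subgroup.commutator_mem_commutator (Subgroup.mem_top a) (Subgroup.mem_top b))
  exact commute_of_commutatorElement_pow_eq_one hodd.coprime_two_left (hcomm hab b).symm
    (hFaith.sq_eq_one_of_mem hKH hab) (hcomm (K.pow_index_mem b) a)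

/-- The case `p = 2`: if `|K : H| = 2`, `|G : K| = q` and `K` is normal in `G`, then `G`
is abelian and `H = 1`. -/
theorem stmt_18 {G : Type*} [Group G] [Finite G] (q : ℕ) (hq : q.Prime) (hodd : Odd q)
    (H K : Subgroup G) (T : Set G)
    (hLF : IsLoopFolder H T) (hRCC : IsRCC T) (hFaith : IsFaithfulFolder H)
    (hord : Nat.card T = 2 * q) (hgen : Subgroup.closure T = ⊤)
    (hHK : H ≤ K) (hKH : H.relIndex K = 2) (hGK : K.index = q)
    (hKnorm : K.Normal) :
    (∀ a b : G, a * b = b * a) ∧ H = ⊥ := by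
  have : IsCyclic (G ⧸ K) := have := Fact.mk hq; isCyclic_of_prime_card hGK
  exact stmt_18_general hLF hRCC hFaith hgen hHK hKH (hGK ▸ hodd)
end
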